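/- Let Q be any quiver whose underlying graph is the extended Dynkin diagram Ẽ_7: vertex set {1,2,…,8} with edges {1,2}, {2,3}, {3,8}, {4,5}, {5,6}, {6,8}, {7,8}. Then for every vertex i of Q the frieze sequence (X^i_j)_{j≥0} satisfies a linear recurrence over the field ℚ(x_1,…,x_8). -/

import Mathlib

/-- The (ordered) edge description of the extended Dynkin diagram Ẽ_7 on vertices
`{1,…,8}` : edges `{1,2}, {2,3}, {3,8}, {4,5}, {5,6}, {6,8}, {7,8}`; the vertex labelled
`k ∈ {1,…,8}` corresponds to the index `k−1` of `Fin 8`. -/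
def e7Edge (a b : ℕ) : Prop :=
  (a = 0 ∧ b = 1) ∨ (a = 1 ∧ b = 2) ∨ (a = 2 ∧ b = 7) ∨ (a = 3 ∧ b = 4) ∨
  (a = 4 ∧ b = 5) ∨ (a = 5 ∧ b = 7) ∨ (a = 6 ∧ b = 7)

/-!
Placing the terms of the frieze sequences at half-steps of time according to a level function that
drops by one along each arrow, the frieze relations become `Z v (t + 2) * Z v t = 1 + ∏ Z u (t + 1)`
over the neighbours `u` of `v`, whatever the orientation. Along an arm the sequences are then
determined by the one at the leaf, and for `Ẽ₇` the two leaf sequences `x` and `y` of the long arms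
satisfy `x (t + 12) = τ t * y (t + 6) - x t` with a coefficient `τ` of period eight, and the same
relation with `x` and `y` exchanged. Hence both lie in a finitely generated module of sequences
stable under the shift, and Cayley–Hamilton yields recurrences with constant coefficients. Divisions
by terms of the frieze are legitimate because every term is a fraction of polynomials taking
positive values at `(1, …, 1)`.
-/

section LinearRecurrence

/-- A sequence is linearly recurrent if it solves some linear recurrence with constant
coefficients. -/
def IsLinearlyRecurrent {R : Type*} [CommSemiring R] (a : ℕ → R) : Prop :=
  ∃ E : LinearRecurrence R, E.IsSolution a

/-- The shift `(aₙ) ↦ (aₙ₊₁)` on sequences. It is taken as an algebra homomorphism because its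
compatibility with termwise products gives the closure of linearly recurrent sequences under
products. -/
def seqShift (R : Type*) [CommSemiring R] : (ℕ → R) →ₐ[R] (ℕ → R) where
  toFun a n := a (n + 1)
  map_one' := rfl
  map_mul' _ _ := rfl
  map_zero' := rfl
  map_add' _ _ := rfl
  commutes' _ := rfl

section CommSemiring

variable {R : Type*} [CommSemiring R]

@[simp]
lemma seqShift_apply (a : ℕ → R) (n : ℕ) : seqShift R a n = a (n + 1) := rfl

lemma seqShift_toLinearMap_pow_apply (a : ℕ → R) (k n : ℕ) :
    ((seqShift R).toLinearMap ^ k) a n = a (n + k) := by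
  induction k generalizing n with
  | zero => simp
  | succ k ih => rw [pow_succ', Module.End.mul_apply, AlgHom.toLinearMap_apply, seqShift_apply, ih,
      add_right_comm, add_assoc]

lemma fg_solSpace (E : LinearRecurrence R) : E.solSpace.FG :=
  Module.Finite.iff_fg.1 (.equiv E.toInit.symm)

lemma map_seqShift_solSpace_le (E : LinearRecurrence R) :
    E.solSpace.map (seqShift R).toLinearMap ≤ E.solSpace := by
  rintro _ ⟨a, ha, rfl⟩ n
  simpa only [AlgHom.toLinearMap_apply, seqShift_apply, add_right_comm] using ha (n + 1)

lemma exists_order_eq_add_isSolution {a : ℕ → R} {E : LinearRecurrence R} (k : ℕ)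
    (ha : E.IsSolution fun n ↦ a (n + k)) :
    ∃ E' : LinearRecurrence R, E'.order = k + E.order ∧ E'.IsSolution a := by
  refine ⟨⟨k + E.order, Fin.append 0 E.coeffs⟩, rfl, fun n ↦ ?_⟩
  simpa [Fin.sum_univ_add, add_assoc, add_comm, add_left_comm] using ha n

end CommSemiring

variable {R : Type*} [CommRing R] {a b : ℕ → R}

lemma isLinearlyRecurrent_of_mem {W : Submodule R (ℕ → R)} (hW : W.FG)
    (hshift : W.map (seqShift R).toLinearMap ≤ W) (ha : a ∈ W) : IsLinearlyRecurrent a := by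
  have : Module.Finite R W := Module.Finite.iff_fg.2 hW
  have hinv : ∀ v ∈ W, (seqShift R).toLinearMap v ∈ W := Submodule.map_le_iff_le_comap.1 hshift
  obtain ⟨p, hp, hroot⟩ :=
    LinearMap.exists_monic_and_aeval_eq_zero R ((seqShift R).toLinearMap.restrict hinv)
  refine ⟨⟨p.natDegree, fun i ↦ -p.coeff i⟩, fun n ↦ ?_⟩
  have happ := congrArg (fun v : W ↦ (v : ℕ → R) n) (LinearMap.congr_fun hroot ⟨a, ha⟩)
  have hpow (k : ℕ) :
      (((seqShift R).toLinearMap.restrict hinv ^ k) ⟨a, ha⟩ : ℕ → R) n = a (n + k) := by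
    rw [Module.End.pow_restrict]
    exact seqShift_toLinearMap_pow_apply a k n
  rw [hp.as_sum] at happ
  simp only [map_add, map_sum, map_mul, map_pow, Polynomial.aeval_X, Polynomial.aeval_C,
    LinearMap.add_apply, LinearMap.sum_apply, Module.End.mul_apply,
    Module.algebraMap_end_apply, Submodule.coe_add, Submodule.coe_sum, Submodule.coe_smul,
    hpow, Pi.add_apply, Finset.sum_apply, Pi.smul_apply, smul_eq_mul, Finset.sum_range,
    LinearMap.zero_apply, Submodule.coe_zero, Pi.zero_apply] at happ
  simpa only [neg_mul, Finset.sum_neg_distrib] using eq_neg_of_add_eq_zero_left happ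

lemma isLinearlyRecurrent_iff_exists_fg :
    IsLinearlyRecurrent a ↔
      ∃ W : Submodule R (ℕ → R), W.FG ∧ W.map (seqShift R).toLinearMap ≤ W ∧ a ∈ W :=
  ⟨fun ⟨E, hE⟩ ↦ ⟨E.solSpace, fg_solSpace E, map_seqShift_solSpace_le E, hE⟩,
    fun ⟨_, hW, hshift, ha⟩ ↦ isLinearlyRecurrent_of_mem hW hshift ha⟩

namespace IsLinearlyRecurrent

lemma of_shift (k : ℕ) (ha : IsLinearlyRecurrent fun n ↦ a (n + k)) : IsLinearlyRecurrent a :=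
  let ⟨_, hE⟩ := ha
  let ⟨E', _, hE'⟩ := exists_order_eq_add_isSolution k hE
  ⟨E', hE'⟩

lemma shift (ha : IsLinearlyRecurrent a) (k : ℕ) : IsLinearlyRecurrent fun n ↦ a (n + k) :=
  let ⟨E, hE⟩ := ha
  ⟨E, fun n ↦ by simpa only [add_right_comm] using hE (n + k)⟩

lemma const (c : R) : IsLinearlyRecurrent fun _ ↦ c :=
  ⟨⟨1, fun _ ↦ 1⟩, fun _ ↦ by simp⟩

lemma sub (ha : IsLinearlyRecurrent a) (hb : IsLinearlyRecurrent b) :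
    IsLinearlyRecurrent fun n ↦ a n - b n := by
  obtain ⟨V, hV, hVs, haV⟩ := isLinearlyRecurrent_iff_exists_fg.1 ha
  obtain ⟨W, hW, hWs, hbW⟩ := isLinearlyRecurrent_iff_exists_fg.1 hb
  refine isLinearlyRecurrent_of_mem (hV.sup hW) ?_
    (sub_mem (Submodule.mem_sup_left haV) (Submodule.mem_sup_right hbW))
  rw [Submodule.map_sup]
  exact sup_le_sup hVs hWs

lemma mul (ha : IsLinearlyRecurrent a) (hb : IsLinearlyRecurrent b) :
    IsLinearlyRecurrent fun n ↦ a n * b n := by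
  obtain ⟨V, hV, hVs, haV⟩ := isLinearlyRecurrent_iff_exists_fg.1 ha
  obtain ⟨W, hW, hWs, hbW⟩ := isLinearlyRecurrent_iff_exists_fg.1 hb
  refine isLinearlyRecurrent_of_mem (hV.mul hW) ?_ (Submodule.mul_mem_mul haV hbW)
  rw [Submodule.map_mul]
  exact mul_le_mul' hVs hWs

-- Decimation carries the `k`-th power of the shift to the shift.
lemma comp_mul_left (ha : IsLinearlyRecurrent a) (k : ℕ) :
    IsLinearlyRecurrent fun n ↦ a (k * n) := by
  obtain ⟨W, hW, hWs, haW⟩ := isLinearlyRecurrent_iff_exists_fg.1 ha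
  refine isLinearlyRecurrent_of_mem (hW.map (LinearMap.funLeft R R (k * ·))) ?_ ⟨a, haW, rfl⟩
  rintro _ ⟨_, ⟨b, hb, rfl⟩, rfl⟩
  refine ⟨((seqShift R).toLinearMap ^ k) b,
    Module.End.pow_apply_mem_of_forall_mem k (Submodule.map_le_iff_le_comap.1 hWs) b hb, ?_⟩
  ext n
  simp [seqShift_toLinearMap_pow_apply, mul_add]

lemma exists_recurrence (ha : IsLinearlyRecurrent a) :
    ∃ s : ℕ, 1 ≤ s ∧ ∃ c : Fin s → R, ∀ j, a (j + s) = ∑ t : Fin s, c t * a (j + t.val) :=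
  let ⟨_, hE⟩ := ha.shift 1
  let ⟨E', horder, hE'⟩ := exists_order_eq_add_isSolution 1 hE
  ⟨E'.order, horder ▸ Nat.le_add_right _ _, E'.coeffs, hE'⟩

end IsLinearlyRecurrent

end LinearRecurrence

section PeriodicCoefficients

variable {R : Type*} [CommRing R] {p : ℕ}

/-- The algebra of sequences of period `p`, as a ring of coefficients for linear recurrences. -/
def periodicSubalgebra (R : Type*) [CommRing R] (p : ℕ) : Subalgebra R (ℕ → R) where
  carrier := {a | Function.Periodic a p}
  mul_mem' := Function.Periodic.mul
  add_mem' := Function.Periodic.add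
  algebraMap_mem' _ _ := rfl

lemma mem_periodicSubalgebra {a : ℕ → R} :
    a ∈ periodicSubalgebra R p ↔ Function.Periodic a p := Iff.rfl

lemma seqShift_mem_periodicSubalgebra {a : ℕ → R} (ha : a ∈ periodicSubalgebra R p) :
    seqShift R a ∈ periodicSubalgebra R p :=
  Function.Periodic.add_const ha 1

lemma periodicSubalgebra_toSubmodule_eq_solSpace [NeZero p] :
    (periodicSubalgebra R p).toSubmodule = LinearRecurrence.solSpace ⟨p, Pi.single 0 1⟩ := by
  ext a
  simp [mem_periodicSubalgebra, Function.Periodic, LinearRecurrence.solSpace,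
    LinearRecurrence.IsSolution, Pi.single_apply]

instance [NeZero p] : Module.Finite R (periodicSubalgebra R p) := by
  change Module.Finite R (periodicSubalgebra R p).toSubmodule
  rw [periodicSubalgebra_toSubmodule_eq_solSpace, Module.Finite.iff_fg]
  exact fg_solSpace _

lemma isLinearlyRecurrent_of_periodic [NeZero p] {a : ℕ → R} (ha : Function.Periodic a p) :
    IsLinearlyRecurrent a :=
  ⟨_, periodicSubalgebra_toSubmodule_eq_solSpace.le ha⟩

theorem isLinearlyRecurrent_of_mem_span_periodic [NeZero p] {ι : Type*} [Finite ι] {d : ℕ}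
    {x : ι → ℕ → R}
    (hx : ∀ i, (fun n ↦ x i (n + d)) ∈ Submodule.span (periodicSubalgebra R p)
      (Set.range fun (jk : ι × Fin d) n ↦ x jk.1 (n + jk.2)))
    (i : ι) : IsLinearlyRecurrent (x i) := by
  set M := Submodule.span (periodicSubalgebra R p)
    (Set.range fun (jk : ι × Fin d) n ↦ x jk.1 (n + jk.2))
  have hmem (j : ι) {k : ℕ} (hk : k ≤ d) : (fun n ↦ x j (n + k)) ∈ M := by
    obtain rfl | hk := hk.eq_or_lt
    exacts [hx j, Submodule.subset_span ⟨(j, ⟨k, hk⟩), rfl⟩]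
  have hshift : ∀ b ∈ M, seqShift R b ∈ M := fun b hb ↦ by
    induction hb using Submodule.span_induction with
    | mem b hb =>
      obtain ⟨⟨j, k⟩, rfl⟩ := hb
      convert hmem j (Nat.succ_le_of_lt k.isLt) using 2 with n
      simp only [seqShift_apply, Nat.succ_eq_add_one, add_right_comm, add_assoc]
    | zero => simp only [map_zero, zero_mem]
    | add b c _ _ hb hc => simpa only [map_add] using add_mem hb hc
    | smul u b _ hb => exact M.smul_mem ⟨_, seqShift_mem_periodicSubalgebra u.2⟩ hb
  exact isLinearlyRecurrent_of_mem (Submodule.fg_span (Set.finite_range _)).restrictScalars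
    (Submodule.map_le_iff_le_comap.2 hshift) (hmem i d.zero_le)

end PeriodicCoefficients

section Arm

variable {R : Type*} [CommRing R]

/-- The sequences of a frieze, read in half-steps as in `halfSteps`, along an arm with `m` vertices,
numbered from the leaf `y 1` to the neighbour `y m` of the branch vertex `y (m + 1)`; the convention
`y 0 = 1` lets the relation at the leaf have the same form as the others. -/
structure IsFriezeArm (m : ℕ) (y : ℕ → ℕ → R) : Prop where
  zero (t : ℕ) : y 0 t = 1
  ne_zero {k : ℕ} (hk : k ≤ m) (t : ℕ) : y k t ≠ 0
  mul {k : ℕ} (hk : k < m) (t : ℕ) :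
    y (k + 1) (t + 2) * y (k + 1) t = 1 + y k (t + 1) * y (k + 2) (t + 1)

namespace IsFriezeArm

variable {m : ℕ} {y : ℕ → ℕ → R}

lemma leaf_mul (h : IsFriezeArm m y) (hm : 0 < m) (t : ℕ) :
    y 1 (t + 2) * y 1 t = 1 + y 2 (t + 1) := by
  simpa only [zero_add, h.zero, one_mul] using h.mul hm t

lemma eq_late_leaf_mul_sub [IsDomain R] (h : IsFriezeArm m y) {k : ℕ} (hk : k < m) (t : ℕ) :
    y (k + 2) (t + 2) = y 1 (t + k + 3) * y (k + 1) (t + 1) - y k t := by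
  induction k generalizing t with
  | zero => linear_combination h.zero t - h.leaf_mul hk (t + 1)
  | succ k ih =>
    have hih := ih (by omega) (t + 1)
    rw [show t + 1 + k + 3 = t + (k + 1) + 3 by omega] at hih
    apply mul_left_cancel₀ (h.ne_zero hk.le (t + 2))
    linear_combination y (k + 2) (t + 1) * hih - h.mul hk (t + 1)
      + h.mul (k.lt_succ_self.trans hk) t

lemma eq_early_leaf_mul_sub [IsDomain R] (h : IsFriezeArm m y) {k : ℕ} (hk : k < m) (t : ℕ) :
    y (k + 2) (t + k + 1) = y 1 t * y (k + 1) (t + k + 2) - y k (t + k + 3) := by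
  induction k with
  | zero => linear_combination h.zero (t + 3) - h.leaf_mul hk t
  | succ k ih =>
    apply mul_left_cancel₀ (h.ne_zero hk.le (t + k + 2))
    linear_combination y (k + 2) (t + k + 3) * ih (by omega) - h.mul hk (t + k + 1)
      + h.mul (k.lt_succ_self.trans hk) (t + k + 2)

lemma isLinearlyRecurrent [IsDomain R] (h : IsFriezeArm m y) (hleaf : IsLinearlyRecurrent (y 1))
    {k : ℕ} (hk : k ≤ m + 1) : IsLinearlyRecurrent (y k) := by
  induction k using Nat.twoStepInduction with
  | zero => simpa only [funext h.zero] using IsLinearlyRecurrent.const 1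
  | one => exact hleaf
  | more k ih₀ ih₁ =>
    refine .of_shift 2 ?_
    simp only [h.eq_late_leaf_mul_sub (Nat.lt_of_succ_lt_succ hk)]
    exact ((hleaf.shift (k + 3)).mul ((ih₁ (by omega)).shift 1)).sub (ih₀ (by omega))

end IsFriezeArm

end Arm

section StarE7

variable {R : Type*} [CommRing R]

/-- The sequences of a frieze of type `Ẽ₇`, read in half-steps as in `halfSteps`: `w` belongs to the
branch vertex, `r` to the short arm and `x i`, for `i : Bool`, to the two long arms. -/
structure IsFriezeE7 (w r : ℕ → R) (x : Bool → ℕ → ℕ → R) : Prop where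
  arm (i : Bool) : IsFriezeArm 3 (x i)
  arm_four (i : Bool) (t : ℕ) : x i 4 t = w t
  w_ne_zero (t : ℕ) : w t ≠ 0
  r_ne_zero (t : ℕ) : r t ≠ 0
  w_mul (i : Bool) (t : ℕ) : w (t + 2) * w t = 1 + x i 3 (t + 1) * x (!i) 3 (t + 1) * r (t + 1)
  r_mul (t : ℕ) : r (t + 2) * r t = 1 + w (t + 1)

namespace IsFriezeE7

/-- The coefficient coupling the two leaf sequences in `leaf_eq_tube_mul_sub`. Its period of four
steps, that is eight half-steps, corresponds to the tube of rank four of type `Ẽ₇`. -/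
def tube (r : ℕ → R) (x : Bool → ℕ → ℕ → R) (i : Bool) (t : ℕ) : R :=
  x i 1 t * x (!i) 1 (t + 8) - r (t + 4)

variable {w r : ℕ → R} {x : Bool → ℕ → ℕ → R} (h : IsFriezeE7 w r x) (i : Bool) (t : ℕ)

include h

lemma arm_three_mul : x i 3 (t + 2) * x i 3 t = 1 + x i 2 (t + 1) * w (t + 1) := by
  rw [(h.arm i).mul (by norm_num), h.arm_four]

variable [IsDomain R]

lemma w_eq_late : w (t + 2) = x i 1 (t + 5) * x i 3 (t + 1) - x i 2 t := by
  rw [← h.arm_four i, (h.arm i).eq_late_leaf_mul_sub (by norm_num)]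

lemma w_eq_early : w (t + 3) = x i 1 t * x i 3 (t + 4) - x i 2 (t + 5) := by
  rw [← h.arm_four i, (h.arm i).eq_early_leaf_mul_sub (by norm_num)]

lemma late_w_mul_r : w (t + 3) * r t = r (t + 4) + x i 3 (t + 2) * x (!i) 3 (t + 2) := by
  apply mul_left_cancel₀ (h.r_ne_zero (t + 2))
  linear_combination w (t + 3) * h.r_mul t - h.r_mul (t + 2) + h.w_mul i (t + 1)

lemma early_w_mul_r : w (t + 1) * r (t + 4) = r t + x i 3 (t + 2) * x (!i) 3 (t + 2) := by
  apply mul_left_cancel₀ (h.r_ne_zero (t + 2))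
  linear_combination w (t + 1) * h.r_mul (t + 2) - h.r_mul t + h.w_mul i (t + 1)

lemma late_leaf_mul_w : x i 1 (t + 6) * w (t + 1) = r (t + 2) * x (!i) 3 (t + 2) + x i 3 t := by
  apply mul_left_cancel₀ ((h.arm i).ne_zero (k := 3) le_rfl (t + 2))
  linear_combination h.w_mul i (t + 1) - w (t + 1) * h.w_eq_late i (t + 1) - h.arm_three_mul i t

lemma early_leaf_mul_w : x i 1 t * w (t + 5) = r (t + 4) * x (!i) 3 (t + 4) + x i 3 (t + 6) := by
  apply mul_left_cancel₀ ((h.arm i).ne_zero (k := 3) le_rfl (t + 4))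
  linear_combination h.w_mul i (t + 3) - w (t + 5) * h.w_eq_early i t - h.arm_three_mul i (t + 4)

lemma late_leaf_mul_three :
    x i 1 (t + 8) * x (!i) 3 (t + 2) = r (t + 4) * x (!i) 2 (t + 3) + r t := by
  apply mul_left_cancel₀ (h.w_ne_zero (t + 3))
  linear_combination x (!i) 3 (t + 2) * h.late_leaf_mul_w i (t + 2)
    + r (t + 4) * h.arm_three_mul (!i) (t + 2) - h.late_w_mul_r i t

lemma early_leaf_mul_three :
    x i 1 t * x (!i) 3 (t + 6) = r (t + 4) * x (!i) 2 (t + 5) + r (t + 8) := by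
  apply mul_left_cancel₀ (h.w_ne_zero (t + 5))
  linear_combination x (!i) 3 (t + 6) * h.early_leaf_mul_w i t
    + r (t + 4) * h.arm_three_mul (!i) (t + 4) - h.early_w_mul_r i (t + 4)

lemma leaf_mul_two :
    x i 1 (t + 12) * x (!i) 2 (t + 5) = x (!i) 1 (t + 6) * r (t + 8) + x i 1 t := by
  apply mul_left_cancel₀ ((h.arm (!i)).ne_zero (k := 3) le_rfl (t + 6))
  linear_combination x (!i) 2 (t + 5) * h.late_leaf_mul_three i (t + 4)
    + r (t + 8) * (h.arm (!i)).mul (k := 1) (by norm_num) (t + 5) - h.early_leaf_mul_three i t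

lemma tube_not : tube r x (!i) t = tube r x i (t + 4) := by
  apply mul_left_cancel₀ ((h.arm i).ne_zero (k := 2) (by norm_num) (t + 5))
  have hlate := (h.arm i).eq_late_leaf_mul_sub (k := 1) (by norm_num) (t + 4)
  have hleaf := h.leaf_mul_two (!i) t
  have hthree := h.early_leaf_mul_three (!i) t
  simp only [Bool.not_not] at hleaf hthree
  simp only [tube, Bool.not_not]
  linear_combination hthree - x i 1 (t + 4) * hleaf - x (!i) 1 t * hlate
    - r (t + 8) * (h.arm i).leaf_mul (by norm_num) (t + 4)

lemma periodic_tube : Function.Periodic (tube r x i) 8 := fun t ↦ by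
  rw [← h.tube_not i (t + 4), ← h.tube_not (!i) t, Bool.not_not]

lemma leaf_eq_tube_mul_sub :
    x i 1 (t + 12) = tube r x i t * x (!i) 1 (t + 6) - x i 1 t := by
  have htube := h.tube_not (!i) t
  simp only [tube, Bool.not_not] at htube ⊢
  linear_combination -(x (!i) 1 (t + 6) * htube) - h.leaf_mul_two i t
    - x i 1 (t + 12) * (h.arm (!i)).leaf_mul (by norm_num) (t + 4)

lemma isLinearlyRecurrent_leaf : IsLinearlyRecurrent (x i 1) := by
  refine isLinearlyRecurrent_of_mem_span_periodic (p := 8) (d := 12) (x := fun j ↦ x j 1)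
    (fun j ↦ ?_) i
  simp only [h.leaf_eq_tube_mul_sub]
  exact sub_mem (Submodule.smul_mem _ (⟨tube r x j, h.periodic_tube j⟩ : periodicSubalgebra R 8)
    (Submodule.subset_span ⟨(!j, 6), rfl⟩)) (Submodule.subset_span ⟨(j, 0), rfl⟩)

lemma isLinearlyRecurrent_arm {k : ℕ} (hk : k ≤ 4) : IsLinearlyRecurrent (x i k) :=
  (h.arm i).isLinearlyRecurrent (h.isLinearlyRecurrent_leaf i) hk

lemma isLinearlyRecurrent_branch : IsLinearlyRecurrent w := by
  simpa only [funext (h.arm_four true)] using h.isLinearlyRecurrent_arm true le_rfl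

lemma isLinearlyRecurrent_short : IsLinearlyRecurrent r := by
  refine .of_shift 4 ?_
  have hr (t : ℕ) : r (t + 4) = x true 1 t * x false 1 (t + 8) - tube r x true t :=
    (sub_sub_cancel _ _).symm
  simp only [hr]
  exact ((h.isLinearlyRecurrent_leaf _).mul ((h.isLinearlyRecurrent_leaf _).shift 8)).sub
    (isLinearlyRecurrent_of_periodic (h.periodic_tube true))

end IsFriezeE7

end StarE7

section Frieze

variable {V R : Type*}

/-- A grading of the vertices of a quiver in which every arrow descends by one, `mult u v` being the
number of arrows from `u` to `v`. -/
def IsLevel (mult : V → V → ℕ) (a : V → ℕ) : Prop :=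
  ∀ u v, mult u v ≠ 0 → a u = a v + 1

/-- The sequences of a frieze read in half-steps: the `j`-th term at `v` is placed at the times
`2 * j - a v` and `2 * j - a v + 1`. For a level function `a` this makes the frieze relations
independent of the orientation of the arrows. -/
def halfSteps (a : V → ℕ) (X : V → ℕ → R) (v : V) (t : ℕ) : R :=
  X v ((t + a v) / 2)

lemma IsLevel.wellFounded [Finite V] {mult : V → V → ℕ} {a : V → ℕ} (ha : IsLevel mult a) :
    WellFounded fun u v ↦ mult u v ≠ 0 :=
  have : IsTrans V fun u v ↦ a v < a u := ⟨fun _ _ _ h h' ↦ h'.trans h⟩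
  have : Std.Irrefl fun u v : V ↦ a v < a u := ⟨fun _ ↦ lt_irrefl _⟩
  Subrelation.wf (r := fun u v ↦ a v < a u) (fun h ↦ by have := ha _ _ h; omega)
    (Finite.wellFounded_of_trans_of_irrefl _)

lemma isLinearlyRecurrent_of_halfSteps [CommRing R] {a : V → ℕ} {X : V → ℕ → R} {v : V}
    (h : IsLinearlyRecurrent (halfSteps a X v)) : IsLinearlyRecurrent (X v) := by
  refine .of_shift (a v) ?_
  convert (h.shift (a v)).comp_mul_left 2 using 2 with j
  exact congrArg (X v) (by omega)

variable [Fintype V] {mult : V → V → ℕ} {X : V → ℕ → R}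

/-- `X` is a family of frieze sequences of the quiver with `mult u v` arrows from `u` to `v`. -/
def IsFrieze [CommSemiring R] (mult : V → V → ℕ) (X : V → ℕ → R) : Prop :=
  ∀ v j, X v (j + 1) * X v j = 1 + (∏ s, X s (j + 1) ^ mult s v) * ∏ d, X d j ^ mult v d

namespace IsFrieze

lemma halfSteps_mul [CommSemiring R] (hX : IsFrieze mult X) {a : V → ℕ} (ha : IsLevel mult a)
    (v : V) (t : ℕ) :
    halfSteps a X v (t + 2) * halfSteps a X v t =
      1 + ∏ u, halfSteps a X u (t + 1) ^ (mult u v + mult v u) := by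
  have hv : (t + 2 + a v) / 2 = (t + a v) / 2 + 1 := by omega
  have hsource (s : V) :
      X s ((t + a v) / 2 + 1) ^ mult s v = halfSteps a X s (t + 1) ^ mult s v := by
    obtain h | h := eq_or_ne (mult s v) 0
    · simp only [h, pow_zero]
    · rw [halfSteps, show (t + 1 + a s) / 2 = (t + a v) / 2 + 1 by have := ha s v h; omega]
  have htarget (d : V) : X d ((t + a v) / 2) ^ mult v d = halfSteps a X d (t + 1) ^ mult v d := by
    obtain h | h := eq_or_ne (mult v d) 0
    · simp only [h, pow_zero]
    · rw [halfSteps, show (t + 1 + a d) / 2 = (t + a v) / 2 by have := ha v d h; omega]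
  simp only [halfSteps, hv, hX v, hsource, htarget, pow_add, Finset.prod_mul_distrib]

lemma mem_of_initial_mem [CommSemiring R] (hX : IsFrieze mult X)
    (hwf : WellFounded fun u v ↦ mult u v ≠ 0) {S : Submonoid R}
    (hadd : ∀ f ∈ S, 1 + f ∈ S) (hdiv : ∀ f, ∀ g ∈ S, f * g ∈ S → f ∈ S)
    (h₀ : ∀ v, X v 0 ∈ S) (v : V) (j : ℕ) : X v j ∈ S := by
  induction j generalizing v with
  | zero => exact h₀ v
  | succ j ihj =>
    induction v using hwf.induction with
    | _ v ihv =>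
      refine hdiv _ _ (ihj v) ?_
      rw [hX v j]
      refine hadd _ (S.mul_mem (S.prod_mem fun s _ ↦ ?_) (S.prod_mem fun d _ ↦ S.pow_mem (ihj d) _))
      obtain h | h := eq_or_ne (mult s v) 0
      · simpa only [h, pow_zero] using S.one_mem
      · exact S.pow_mem (ihv s h) _

end IsFrieze

end Frieze

section Positivity

variable {A k : Type*} [CommRing A] [CommRing k] [PartialOrder k] [IsStrictOrderedRing k]

/-- The elements `p / q` for which the values of `p` and `q` under `φ` are positive. They are
stable under the operations occurring in the frieze relations, and are nonzero. -/
def positiveFractions (F : Type*) [CommRing F] [Algebra A F] (φ : A →+* k) : Submonoid F where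
  carrier := {f | ∃ p q, 0 < φ p ∧ 0 < φ q ∧ f * algebraMap A F q = algebraMap A F p}
  one_mem' := ⟨1, 1, by simp, by simp, one_mul _⟩
  mul_mem' := by
    rintro f g ⟨p, q, hp, hq, h⟩ ⟨p', q', hp', hq', h'⟩
    refine ⟨p * p', q * q', by simpa using mul_pos hp hp', by simpa using mul_pos hq hq', ?_⟩
    rw [map_mul, map_mul, mul_mul_mul_comm, h, h']

variable {F : Type*} [CommRing F] [Algebra A F] {φ : A →+* k} {f g : F}

lemma algebraMap_mem_positiveFractions {p : A} (hp : 0 < φ p) :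
    algebraMap A F p ∈ positiveFractions F φ :=
  ⟨p, 1, hp, by simp, by simp⟩

lemma add_mem_positiveFractions (hf : f ∈ positiveFractions F φ) (hg : g ∈ positiveFractions F φ) :
    f + g ∈ positiveFractions F φ := by
  obtain ⟨p, q, hp, hq, h⟩ := hf
  obtain ⟨p', q', hp', hq', h'⟩ := hg
  refine ⟨p * q' + p' * q, q * q', ?_, by simpa using mul_pos hq hq', ?_⟩
  · simpa using add_pos (mul_pos hp hq') (mul_pos hp' hq)
  · simp only [map_add, map_mul]
    linear_combination algebraMap A F q' * h + algebraMap A F q * h'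

lemma mem_positiveFractions_of_mul (hg : g ∈ positiveFractions F φ)
    (hfg : f * g ∈ positiveFractions F φ) : f ∈ positiveFractions F φ := by
  obtain ⟨p, q, hp, hq, h⟩ := hfg
  obtain ⟨p', q', hp', hq', h'⟩ := hg
  refine ⟨p * q', q * p', by simpa using mul_pos hp hq', by simpa using mul_pos hq hp', ?_⟩
  simp only [map_mul]
  linear_combination algebraMap A F q' * h - f * algebraMap A F q * h'

lemma ne_zero_of_mem_positiveFractions [FaithfulSMul A F] (hf : f ∈ positiveFractions F φ) :
    f ≠ 0 := by
  rintro rfl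
  obtain ⟨p, q, hp, -, h⟩ := hf
  rw [zero_mul, eq_comm, FaithfulSMul.algebraMap_eq_zero_iff] at h
  simp [h] at hp

lemma IsFrieze.ne_zero_of_algebraMap [FaithfulSMul A F] {V : Type*} [Fintype V]
    {mult : V → V → ℕ} {X : V → ℕ → F} (hX : IsFrieze mult X)
    (hwf : WellFounded fun u v ↦ mult u v ≠ 0) (φ : A →+* k) {x : V → A} (hx : ∀ v, 0 < φ (x v))
    (h₀ : ∀ v, X v 0 = algebraMap A F (x v)) (v : V) (j : ℕ) : X v j ≠ 0 :=
  ne_zero_of_mem_positiveFractions (φ := φ) <| hX.mem_of_initial_mem hwf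
    (fun _ ↦ add_mem_positiveFractions (one_mem _)) (fun _ _ ↦ mem_positiveFractions_of_mul)
    (fun v ↦ h₀ v ▸ algebraMap_mem_positiveFractions (hx v)) v j

end Positivity

section TypeE7

instance : DecidableRel e7Edge := fun a b ↦ by unfold e7Edge; infer_instance

/-- The level function of an orientation of `Ẽ₇` with value `3` at the branch vertex. -/
def e7Level (mult : Fin 8 → Fin 8 → ℕ) : Fin 8 → ℕ :=
  ![2 * (mult 2 7 + mult 1 2 + mult 0 1), 1 + 2 * (mult 2 7 + mult 1 2), 2 + 2 * mult 2 7,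
    2 * (mult 5 7 + mult 4 5 + mult 3 4), 1 + 2 * (mult 5 7 + mult 4 5), 2 + 2 * mult 5 7,
    2 + 2 * mult 6 7, 3]

/-- The two long arms of `Ẽ₇`, numbered from the leaf to the branch vertex as in `IsFriezeArm`. -/
def e7Arm {R : Type*} [One R] (Z : Fin 8 → ℕ → R) : Bool → ℕ → ℕ → R
  | _, 0 => 1
  | false, 1 => Z 0
  | false, 2 => Z 1
  | false, 3 => Z 2
  | true, 1 => Z 3
  | true, 2 => Z 4
  | true, 3 => Z 5
  | _, _ + 4 => Z 7

variable {mult : Fin 8 → Fin 8 → ℕ}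
  (hedge : ∀ u v : Fin 8, e7Edge u.val v.val → mult u v + mult v u = 1)
  (hnonedge : ∀ u v : Fin 8, ¬ e7Edge u.val v.val → ¬ e7Edge v.val u.val → mult u v = 0)

include hedge hnonedge

lemma mult_add_mult_e7 (u v : Fin 8) :
    mult u v + mult v u = if e7Edge u v ∨ e7Edge v u then 1 else 0 := by
  split_ifs with h
  · exact h.elim (hedge u v) fun h ↦ add_comm (mult v u) _ ▸ hedge v u h
  · rw [not_or] at h
    rw [hnonedge u v h.1 h.2, hnonedge v u h.2 h.1]

lemma isLevel_e7Level : IsLevel mult (e7Level mult) := by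
  intro u v huv
  have hadd := mult_add_mult_e7 hedge hnonedge u v
  have hadj : e7Edge u v ∨ e7Edge v u := by
    by_contra h
    rw [if_neg h] at hadd
    omega
  rw [if_pos hadj] at hadd
  fin_cases u <;> fin_cases v <;> simp [e7Edge] at hadj <;>
    simp [e7Level] at hadd huv ⊢ <;> omega

lemma IsFrieze.isFriezeE7 {R : Type*} [CommRing R] {X : Fin 8 → ℕ → R}
    (hX : IsFrieze mult X) (hne : ∀ v j, X v j ≠ 0) :
    IsFriezeE7 (halfSteps (e7Level mult) X 7) (halfSteps (e7Level mult) X 6)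
      (e7Arm (halfSteps (e7Level mult) X)) := by
  set Z := halfSteps (e7Level mult) X
  have hZ0 (v : Fin 8) (t : ℕ) : Z v t ≠ 0 := hne _ _
  have hZ (v : Fin 8) (t : ℕ) : Z v (t + 2) * Z v t =
      1 + ∏ u : Fin 8, Z u (t + 1) ^ if e7Edge u v ∨ e7Edge v u then 1 else 0 := by
    simpa only [mult_add_mult_e7 hedge hnonedge] using
      hX.halfSteps_mul (isLevel_e7Level hedge hnonedge) v t
  refine ⟨fun i ↦ ⟨fun _ ↦ ?_, fun {k} hk _ ↦ ?_, fun {k} hk _ ↦ ?_⟩, fun _ _ ↦ ?_, hZ0 7, hZ0 6,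
    fun i _ ↦ ?_, fun _ ↦ ?_⟩
  · simp [e7Arm]
  · have : Nontrivial R := nontrivial_of_ne _ _ (hne 0 0)
    interval_cases k <;> cases i <;> simp [e7Arm, hZ0]
  · interval_cases k <;> cases i <;> simp [e7Arm, hZ, Fin.prod_univ_eight, e7Edge]
  · simp [e7Arm]
  · cases i <;> simp [e7Arm, hZ, Fin.prod_univ_eight, e7Edge, mul_comm (Z 5 _)]
  · simp [hZ, Fin.prod_univ_eight, e7Edge]

end TypeE7

theorem stmt_3_general {R : Type*} [CommRing R] [IsDomain R] {mult : Fin 8 → Fin 8 → ℕ}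
    (hedge : ∀ u v : Fin 8, e7Edge u.val v.val → mult u v + mult v u = 1)
    (hnonedge : ∀ u v : Fin 8, ¬ e7Edge u.val v.val → ¬ e7Edge v.val u.val → mult u v = 0)
    {X : Fin 8 → ℕ → R} (hX : IsFrieze mult X) (hne : ∀ v j, X v j ≠ 0) (i : Fin 8) :
    ∃ s : ℕ, 1 ≤ s ∧ ∃ coeff : Fin s → R,
      ∀ j : ℕ, X i (j + s) = ∑ t : Fin s, coeff t * X i (j + t.val) := by
  have h := hX.isFriezeE7 hedge hnonedge hne
  refine (isLinearlyRecurrent_of_halfSteps (a := e7Level mult) ?_).exists_recurrence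
  fin_cases i
  · exact h.isLinearlyRecurrent_leaf false
  · exact h.isLinearlyRecurrent_arm false (k := 2) (by norm_num)
  · exact h.isLinearlyRecurrent_arm false (k := 3) (by norm_num)
  · exact h.isLinearlyRecurrent_leaf true
  · exact h.isLinearlyRecurrent_arm true (k := 2) (by norm_num)
  · exact h.isLinearlyRecurrent_arm true (k := 3) (by norm_num)
  · exact h.isLinearlyRecurrent_short
  · exact h.isLinearlyRecurrent_branch

/-- Let `Q` be any orientation of Ẽ_7, encoded by the arrow multiplicity
function `mult` : for each edge `{u,v}` there is exactly one arrow between `u` and `v`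
(in one of the two directions), and there are no other arrows. Then every frieze
sequence `(X^i_j)_j` in `ℚ(x_1,…,x_8)` satisfies a linear recurrence. -/
theorem stmt_3
    (mult : Fin 8 → Fin 8 → ℕ)   -- number of arrows from `u` to `v`
    (hedge : ∀ u v : Fin 8, e7Edge u.val v.val → mult u v + mult v u = 1)
    (hnonedge : ∀ u v : Fin 8, ¬ e7Edge u.val v.val → ¬ e7Edge v.val u.val → mult u v = 0)
    -- the frieze sequences
    (X : Fin 8 → ℕ → FractionRing (MvPolynomial (Fin 8) ℚ))
    (hX0 : ∀ v, X v 0 = algebraMap (MvPolynomial (Fin 8) ℚ)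
      (FractionRing (MvPolynomial (Fin 8) ℚ)) (MvPolynomial.X v))
    (hXrec : ∀ v (j : ℕ), X v (j+1) * X v j =
      1 + (∏ s : Fin 8, X s (j+1) ^ mult s v) * (∏ d : Fin 8, X d j ^ mult v d)) :
    -- every frieze sequence satisfies a linear recurrence
    ∀ i : Fin 8, ∃ s : ℕ, 1 ≤ s ∧
      ∃ coeff : Fin s → FractionRing (MvPolynomial (Fin 8) ℚ),
        ∀ j : ℕ, X i (j + s) = ∑ t : Fin s, coeff t * X i (j + t.val) := by
  exact stmt_3_general hedge hnonedge hXrec <|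
    IsFrieze.ne_zero_of_algebraMap hXrec (isLevel_e7Level hedge hnonedge).wellFounded
      (MvPolynomial.eval 1) (by simp) hX0
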